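/- For every real κ with 0 ≤ κ < 1 and all reals α, β with 0 ≤ α ≤ 1/2 and 1/2 ≤ β ≤ 1, the function f(α,β) = (αβ − 2^{κ-2})² + (αβ − 2^{κ-4})² + (α(1−β) − 2^{κ-4})² satisfies f(α,β) ≥ 9·2^{2κ}/512, with equality at α = (7/32)·2^κ and β = 5/7. -/

import Mathlib

noncomputable section

/-- The function `f(α,β) = (αβ − 2^{κ-2})² + (αβ − 2^{κ-4})² + (α(1−β) − 2^{κ-4})²`. -/
def fCase2 (κ α β : ℝ) : ℝ :=
  (α * β - (2:ℝ) ^ (κ - 2)) ^ 2 + (α * β - (2:ℝ) ^ (κ - 4)) ^ 2 +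
    (α * (1 - β) - (2:ℝ) ^ (κ - 4)) ^ 2

/-- For `0 ≤ κ < 1`, `0 ≤ α ≤ 1/2` and `1/2 ≤ β ≤ 1` one has
`f(α,β) ≥ 9·2^{2κ}/512`, with equality at `α = (7/32)·2^κ`, `β = 5/7`. -/
theorem fCase2_min (κ : ℝ) (hκ0 : 0 ≤ κ) (hκ1 : κ < 1) :
    (∀ α β : ℝ, 0 ≤ α → α ≤ 1/2 → 1/2 ≤ β → β ≤ 1 →
      9 * (2:ℝ) ^ (2 * κ) / 512 ≤ fCase2 κ α β) ∧
    fCase2 κ ((7/32) * (2:ℝ) ^ κ) (5/7) = 9 * (2:ℝ) ^ (2 * κ) / 512 := by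
  have h2 : (2:ℝ) ^ (κ - 2) = (2:ℝ) ^ κ / 4 := by
    rw [Real.rpow_sub (by norm_num)]; norm_num
  have h4 : (2:ℝ) ^ (κ - 4) = (2:ℝ) ^ κ / 16 := by
    rw [Real.rpow_sub (by norm_num)]; norm_num
  have hd : (2:ℝ) ^ (2 * κ) = (2:ℝ) ^ κ * (2:ℝ) ^ κ := by
    rw [← Real.rpow_add (by norm_num), two_mul]
  unfold fCase2
  rw [h2, h4, hd]
  generalize (2:ℝ) ^ κ = t
  constructor
  · intro α β _ _ _ _
    nlinarith [sq_nonneg (α * β - 5 / 32 * t), sq_nonneg (α * (1 - β) - t / 16)]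
  · ring

end
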